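/- Let L be a directed encoding for the directed degree sequence ᵈ with exactly p 2-defect arcs and exactly q (−1)-defect arcs, and let a_1, b_1, a_2, b_2 ∈ [n] be four distinct vertices with L(a_1, b_1) ≠ 0 and L(a_2, b_2) = 1. Define η* = η_{a_1}^- + η_{b_1}^+ + η_{a_2}^- + η_{b_2}^+ and ζ* = ζ_{a_1}^- + ζ_{b_1}^+ + ζ_{a_2}^- + ζ_{b_2}^+. Then the number of ordered pairs of vertices (a_3, b_3) such that L(a_3, b_3) = 1, L(a_1, b_3) = L(a_3, b_2) = 0, and a_1, b_1, a_2, b_2, a_3, b_3 are all distinct is at least m − 2p + q − ( r_max·( 2·r_max − (ζ_{a_1}^+ + ζ_{b_2}^-) + 2·(η_{a_1}^+ + η_{b_2}^-) + 4 ) + η* − 2·ζ* + Σ_{x ∈ N̂_L^+(a_1)} (η_x^- − 2·ζ_x^-) + Σ_{y ∈ N̂_L^-(b_2)} (η_y^+ − 2·ζ_y^+) ). -/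

import Mathlib

/-!
Counting arcs by label, an encoding has `m - 2p + q` arcs labelled `1`, and in the same way a vertex
`v` is the head of `d⁻_v - 2ζ⁻_v + η⁻_v` arcs labelled `1` (`sum_one_in`) and has
`d⁺_v - ζ⁺_v + 2η⁺_v` out-neighbours along nonzero labels (`card_nbrOutHat`). The other two
semi-degree counts follow by transposing the matrix.

An arc `(a₃, b₃)` labelled `1` fails to be admissible only if `b₃ ∈ N̂⁺(a₁)`, or `a₃ ∈ N̂⁻(b₂)`, or
`b₃ ∈ {a₁, a₂}`, or `a₃ ∈ {b₁, b₂}`: the coincidences `b₃ = b₁` and `a₃ = a₁` fall under the first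
case, `a₃ = a₂` and `b₃ = b₂` under the second. The union bound over these six families, with each
semi-degree bounded by `r_max`, is the claimed inequality.
-/

open scoped Classical

noncomputable section

namespace DirectedSwitchChain

variable {n : ℕ}

/-- A directed encoding for the directed degree sequence `(dm, dp)`: an integer
matrix with zero diagonal, entries in `{-1, 0, 1, 2}`, row sums `dp` and column
sums `dm`. -/
def IsDirEncoding (dm dp : Fin n → ℕ) (L : Matrix (Fin n) (Fin n) ℤ) : Prop :=
  (∀ i, L i i = 0) ∧
  (∀ i j, L i j = -1 ∨ L i j = 0 ∨ L i j = 1 ∨ L i j = 2) ∧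
  (∀ j, ∑ k, L j k = (dp j : ℤ)) ∧
  (∀ j, ∑ k, L k j = (dm j : ℤ))

/-- `N⁺_L(v)`: out-neighbours of `v` along arcs labelled `1`. -/
def nbrOut (L : Matrix (Fin n) (Fin n) ℤ) (v : Fin n) : Set (Fin n) :=
  {w | w ≠ v ∧ L v w = 1}

/-- `N⁻_L(v)`: in-neighbours of `v` along arcs labelled `1`. -/
def nbrIn (L : Matrix (Fin n) (Fin n) ℤ) (v : Fin n) : Set (Fin n) :=
  {w | w ≠ v ∧ L w v = 1}

/-- `N̂⁺_L(v)`: all out-neighbours of `v` (along arcs with nonzero label). -/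
def nbrOutHat (L : Matrix (Fin n) (Fin n) ℤ) (v : Fin n) : Set (Fin n) :=
  {w | w ≠ v ∧ L v w ≠ 0}

/-- `N̂⁻_L(v)`: all in-neighbours of `v` (along arcs with nonzero label). -/
def nbrInHat (L : Matrix (Fin n) (Fin n) ℤ) (v : Fin n) : Set (Fin n) :=
  {w | w ≠ v ∧ L w v ≠ 0}

/-- `ζ⁺_v`: the number of 2-defect arcs with tail `v`. -/
def zetaOut (L : Matrix (Fin n) (Fin n) ℤ) (v : Fin n) : ℕ :=
  {w | w ≠ v ∧ L v w = 2}.ncard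

/-- `ζ⁻_v`: the number of 2-defect arcs with head `v`. -/
def zetaIn (L : Matrix (Fin n) (Fin n) ℤ) (v : Fin n) : ℕ :=
  {w | w ≠ v ∧ L w v = 2}.ncard

/-- `η⁺_v`: the number of (−1)-defect arcs with tail `v`. -/
def etaOut (L : Matrix (Fin n) (Fin n) ℤ) (v : Fin n) : ℕ :=
  {w | w ≠ v ∧ L v w = -1}.ncard

/-- `η⁻_v`: the number of (−1)-defect arcs with head `v`. -/
def etaIn (L : Matrix (Fin n) (Fin n) ℤ) (v : Fin n) : ℕ :=
  {w | w ≠ v ∧ L w v = -1}.ncard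


/-- The set of (ordered) arcs of `L` carrying the label `c`. -/
def labelArcs (L : Matrix (Fin n) (Fin n) ℤ) (c : ℤ) : Set (Fin n × Fin n) :=
  {ab | ab.1 ≠ ab.2 ∧ L ab.1 ab.2 = c}

/-- The maximum semi-degree. -/
def rmax (dm dp : Fin n → ℕ) : ℕ := Finset.univ.sup fun j => max (dm j) (dp j)

theorem ncard_eq_sum {α : Type*} [Fintype α] (P : α → Prop) :
    (({x | P x}.ncard : ℕ) : ℤ) = ∑ x, if P x then 1 else 0 := by
  rw [Set.ncard_eq_toFinset_card', Finset.sum_boole]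
  simp

theorem IsDirEncoding.transpose {dm dp : Fin n → ℕ} {L : Matrix (Fin n) (Fin n) ℤ}
    (hL : IsDirEncoding dm dp L) : IsDirEncoding dp dm L.transpose :=
  ⟨hL.1, fun i j => hL.2.1 j i, hL.2.2.2, hL.2.2.1⟩

theorem zetaIn_eq {dm dp : Fin n → ℕ} {L : Matrix (Fin n) (Fin n) ℤ}
    (hL : IsDirEncoding dm dp L) (v : Fin n) :
    (zetaIn L v : ℤ) = ∑ w, if L w v = 2 then 1 else 0 := by
  rw [zetaIn, ncard_eq_sum]
  refine Finset.sum_congr rfl fun w _ => ?_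
  have := hL.1 v
  by_cases h : w = v
  · subst h; simp [this]
  · simp [h]

theorem etaIn_eq {dm dp : Fin n → ℕ} {L : Matrix (Fin n) (Fin n) ℤ}
    (hL : IsDirEncoding dm dp L) (v : Fin n) :
    (etaIn L v : ℤ) = ∑ w, if L w v = -1 then 1 else 0 := by
  rw [etaIn, ncard_eq_sum]
  refine Finset.sum_congr rfl fun w _ => ?_
  have := hL.1 v
  by_cases h : w = v
  · subst h; simp [this]
  · simp [h]

theorem labelArcs_eq {dm dp : Fin n → ℕ} {L : Matrix (Fin n) (Fin n) ℤ}
    (hL : IsDirEncoding dm dp L) {c : ℤ} (hc : c ≠ 0) :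
    ((labelArcs L c).ncard : ℤ) = ∑ w, ∑ v, if L w v = c then 1 else 0 := by
  rw [labelArcs, ncard_eq_sum, Fintype.sum_prod_type]
  refine Finset.sum_congr rfl fun w _ => Finset.sum_congr rfl fun v _ => ?_
  have := hL.1 v
  by_cases h : w = v
  · subst h; simp [this, hc.symm]
  · simp [h]

/-- The number of arcs labelled `1` with head `v`. -/
theorem sum_one_in {dm dp : Fin n → ℕ} {L : Matrix (Fin n) (Fin n) ℤ}
    (hL : IsDirEncoding dm dp L) (v : Fin n) :
    (∑ w, if L w v = 1 then (1 : ℤ) else 0) = dm v - 2 * zetaIn L v + etaIn L v := by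
  rw [zetaIn_eq hL, etaIn_eq hL, ← hL.2.2.2 v, Finset.mul_sum, ← Finset.sum_sub_distrib,
    ← Finset.sum_add_distrib]
  refine Finset.sum_congr rfl fun w _ => ?_
  rcases hL.2.1 w v with h | h | h | h <;> simp [h]

/-- The number of arcs labelled `1` with tail `v`. -/
theorem sum_one_out {dm dp : Fin n → ℕ} {L : Matrix (Fin n) (Fin n) ℤ}
    (hL : IsDirEncoding dm dp L) (v : Fin n) :
    (∑ w, if L v w = 1 then (1 : ℤ) else 0) = dp v - 2 * zetaOut L v + etaOut L v :=
  sum_one_in hL.transpose v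

theorem card_nbrInHat {dm dp : Fin n → ℕ} {L : Matrix (Fin n) (Fin n) ℤ}
    (hL : IsDirEncoding dm dp L) (v : Fin n) :
    ((Finset.univ.filter (· ∈ nbrInHat L v)).card : ℤ)
      = dm v - zetaIn L v + 2 * etaIn L v := by
  rw [zetaIn_eq hL, etaIn_eq hL, ← hL.2.2.2 v, Finset.mul_sum, ← Finset.sum_sub_distrib,
    ← Finset.sum_add_distrib, ← Finset.sum_boole]
  refine Finset.sum_congr rfl fun w _ => ?_
  have := hL.1 v
  by_cases hw : w = v
  · subst hw; simp [nbrInHat, this]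
  · rcases hL.2.1 w v with h | h | h | h <;> simp [h, nbrInHat, hw]

theorem card_nbrOutHat {dm dp : Fin n → ℕ} {L : Matrix (Fin n) (Fin n) ℤ}
    (hL : IsDirEncoding dm dp L) (v : Fin n) :
    ((Finset.univ.filter (· ∈ nbrOutHat L v)).card : ℤ)
      = dp v - zetaOut L v + 2 * etaOut L v :=
  card_nbrInHat hL.transpose v

/-- The total number of arcs labelled `1`. -/
theorem sum_one {dm dp : Fin n → ℕ} {L : Matrix (Fin n) (Fin n) ℤ}
    (hL : IsDirEncoding dm dp L) :
    (∑ w, ∑ v, if L w v = 1 then (1 : ℤ) else 0)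
      = ((∑ j, dm j : ℕ) : ℤ) - 2 * (labelArcs L 2).ncard + (labelArcs L (-1)).ncard := by
  rw [labelArcs_eq hL (by norm_num), labelArcs_eq hL (by norm_num)]
  push_cast
  simp_rw [← hL.2.2.2]
  rw [Finset.sum_comm (f := fun j k => L k j)]
  simp_rw [Finset.mul_sum, ← Finset.sum_sub_distrib, ← Finset.sum_add_distrib]
  refine Finset.sum_congr rfl fun w _ => Finset.sum_congr rfl fun v _ => ?_
  rcases hL.2.1 w v with h | h | h | h <;> simp [h]

theorem dm_le_rmax (dm dp : Fin n → ℕ) (v : Fin n) : (dm v : ℤ) ≤ rmax dm dp := by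
  have := Finset.le_sup (f := fun j => max (dm j) (dp j)) (Finset.mem_univ v)
  exact_mod_cast (le_max_left _ _).trans this

theorem dp_le_rmax (dm dp : Fin n → ℕ) (v : Fin n) : (dp v : ℤ) ≤ rmax dm dp := by
  have := Finset.le_sup (f := fun j => max (dm j) (dp j)) (Finset.mem_univ v)
  exact_mod_cast (le_max_right _ _).trans this

/-- The number of arcs labelled `1` whose head lies in `S`, with in-degrees bounded by `R`. -/
theorem sum_one_in_le {dm dp : Fin n → ℕ} {L : Matrix (Fin n) (Fin n) ℤ}
    (hL : IsDirEncoding dm dp L) {R : ℤ} (hR : ∀ v, (dm v : ℤ) ≤ R) (S : Finset (Fin n)) :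
    (∑ v ∈ S, ∑ w, if L w v = 1 then (1 : ℤ) else 0)
      ≤ R * S.card + ∑ v ∈ S, ((etaIn L v : ℤ) - 2 * zetaIn L v) := by
  rw [mul_comm, ← nsmul_eq_mul, ← Finset.sum_const, ← Finset.sum_add_distrib]
  refine Finset.sum_le_sum fun v _ => ?_
  rw [sum_one_in hL]
  linarith [hR v]

/-- Lower bound on the number of ordered pairs `(a₃, b₃)` with `L(a₃,b₃) = 1`,
`L(a₁,b₃) = L(a₃,b₂) = 0` and `a₁, b₁, a₂, b₂, a₃, b₃` all distinct. -/
theorem dir_choose_third_arc_lower_bound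
    (dm dp : Fin n → ℕ) (hsum : ∑ j, dm j = ∑ j, dp j)
    (L : Matrix (Fin n) (Fin n) ℤ) (hL : IsDirEncoding dm dp L)
    (p q : ℕ)
    (hp : (labelArcs L 2).ncard = p)
    (hq : (labelArcs L (-1)).ncard = q)
    (a1 b1 a2 b2 : Fin n)
    (hdist : a1 ≠ b1 ∧ a1 ≠ a2 ∧ a1 ≠ b2 ∧ b1 ≠ a2 ∧ b1 ≠ b2 ∧ a2 ≠ b2)
    (hL1 : L a1 b1 ≠ 0) (hL2 : L a2 b2 = 1) :
    ((∑ j, dm j : ℕ) : ℤ) - 2 * p + q -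
        ((rmax dm dp : ℤ) *
            (2 * (rmax dm dp : ℤ) - ((zetaOut L a1 : ℤ) + zetaIn L b2)
              + 2 * ((etaOut L a1 : ℤ) + etaIn L b2) + 4)
          + ((etaIn L a1 : ℤ) + etaOut L b1 + etaIn L a2 + etaOut L b2)
          - 2 * ((zetaIn L a1 : ℤ) + zetaOut L b1 + zetaIn L a2 + zetaOut L b2)
          + ∑ x ∈ Finset.univ.filter (· ∈ nbrOutHat L a1),
              ((etaIn L x : ℤ) - 2 * zetaIn L x)
          + ∑ y ∈ Finset.univ.filter (· ∈ nbrInHat L b2),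
              ((etaOut L y : ℤ) - 2 * zetaOut L y)) ≤
      ({ab : Fin n × Fin n |
          L ab.1 ab.2 = 1 ∧ L a1 ab.2 = 0 ∧ L ab.1 b2 = 0 ∧
          ab.1 ≠ a1 ∧ ab.1 ≠ b1 ∧ ab.1 ≠ a2 ∧ ab.1 ≠ b2 ∧
          ab.2 ≠ a1 ∧ ab.2 ≠ b1 ∧ ab.2 ≠ a2 ∧ ab.2 ≠ b2 ∧ ab.1 ≠ ab.2}.ncard : ℤ) := by
  obtain ⟨h1, h2, h3, h4, h5, h6⟩ := hdist
  subst hp hq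
  set A := Finset.univ.filter (· ∈ nbrOutHat L a1) with hA
  set B := Finset.univ.filter (· ∈ nbrInHat L b2) with hB
  set R : ℤ := (rmax dm dp : ℤ) with hRdef
  let f : Fin n → Fin n → ℤ := fun i j => if L i j = 1 then 1 else 0
  have hR0 : 0 ≤ R := by positivity
  have hm : ∀ v, (dm v : ℤ) ≤ R := dm_le_rmax dm dp
  have hp : ∀ v, (dp v : ℤ) ≤ R := dp_le_rmax dm dp
  -- The union bound, pointwise on indicator functions.
  have key : ∑ i, ∑ j, (f i j - (if j ∈ A then f i j else 0) - (if i ∈ B then f i j else 0)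
      - (if j = a1 then f i j else 0) - (if j = a2 then f i j else 0)
      - (if i = b1 then f i j else 0) - (if i = b2 then f i j else 0)) ≤
      ({ab : Fin n × Fin n |
          L ab.1 ab.2 = 1 ∧ L a1 ab.2 = 0 ∧ L ab.1 b2 = 0 ∧
          ab.1 ≠ a1 ∧ ab.1 ≠ b1 ∧ ab.1 ≠ a2 ∧ ab.1 ≠ b2 ∧
          ab.2 ≠ a1 ∧ ab.2 ≠ b1 ∧ ab.2 ≠ a2 ∧ ab.2 ≠ b2 ∧ ab.1 ≠ ab.2}.ncard : ℤ) := by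
    rw [ncard_eq_sum, Fintype.sum_prod_type]
    refine Finset.sum_le_sum fun i _ => Finset.sum_le_sum fun j _ => ?_
    have hd := hL.1
    have hjA : j ∈ A ↔ j ≠ a1 ∧ L a1 j ≠ 0 := by
      rw [hA, Finset.mem_filter]; exact and_iff_right (Finset.mem_univ _)
    have hiB : i ∈ B ↔ i ≠ b2 ∧ L i b2 ≠ 0 := by
      rw [hB, Finset.mem_filter]; exact and_iff_right (Finset.mem_univ _)
    by_cases hf : L i j = 1
    · simp only [f, hf, if_true]
      -- The coincidences covered by `A` and `B`, and the loop excluded by the zero diagonal.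
      have t1 : i = a1 → j ∈ A := by rintro rfl; rw [hjA]; grind
      have t2 : j = b1 → j ∈ A := by rintro rfl; rw [hjA]; grind
      have t3 : i = a2 → i ∈ B := by rintro rfl; rw [hiB]; grind
      have t4 : j = b2 → i ∈ B := by rintro rfl; rw [hiB]; grind
      have t5 : i ≠ j := by rintro rfl; grind
      by_cases hbad : j ∈ A ∨ i ∈ B ∨ j = a1 ∨ j = a2 ∨ i = b1 ∨ i = b2
      · refine le_trans ?_ (show (0 : ℤ) ≤ _ by split_ifs <;> norm_num)
        have nn (P : Prop) [Decidable P] : (0 : ℤ) ≤ if P then 1 else 0 := by split_ifs <;> norm_num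
        have := nn (j ∈ A)
        have := nn (i ∈ B)
        have := nn (j = a1)
        have := nn (j = a2)
        have := nn (i = b1)
        have := nn (i = b2)
        rcases hbad with h | h | h | h | h | h <;> simp only [if_pos h] at * <;> linarith
      · push Not at hbad
        obtain ⟨g1, g2, g3, g4, g5, g6⟩ := hbad
        have u1 : L a1 j = 0 := by by_contra h; exact g1 (hjA.2 ⟨g3, h⟩)
        have u2 : L i b2 = 0 := by by_contra h; exact g2 (hiB.2 ⟨g6, h⟩)
        simp [g1, g2, g3, g4, g5, g6, u1, u2, t5, mt t1 g1, mt t2 g1, mt t3 g2, mt t4 g2]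
    · simp [f, hf]
  have e1 : ∑ i, ∑ j, f i j = _ := sum_one hL
  have e2 : ∑ i, ∑ j, (if j ∈ A then f i j else 0) = ∑ j ∈ A, ∑ i, f i j := by
    rw [Finset.sum_comm]; simp [Finset.sum_ite_irrel]
  have e3 : ∑ i, ∑ j, (if i ∈ B then f i j else 0) = ∑ i ∈ B, ∑ j, f i j := by
    simp [Finset.sum_ite_irrel]
  have e4 (a : Fin n) : ∑ i, ∑ j, (if j = a then f i j else 0) = ∑ i, f i a := by simp
  have e5 (a : Fin n) : ∑ i, ∑ j, (if i = a then f i j else 0) = ∑ j, f a j := by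
    simp [Finset.sum_ite_irrel]
  have i1 : ∀ v, ∑ i, f i v = _ := sum_one_in hL
  have i2 : ∀ v, ∑ j, f v j = _ := sum_one_out hL
  have bA : ∑ j ∈ A, ∑ i, f i j ≤ _ := sum_one_in_le hL hm A
  have bB : ∑ i ∈ B, ∑ j, f i j ≤ R * B.card + ∑ y ∈ B, ((etaOut L y : ℤ) - 2 * zetaOut L y) :=
    sum_one_in_le hL.transpose hp B
  have cA : (A.card : ℤ) ≤ R - zetaOut L a1 + 2 * etaOut L a1 := by
    rw [hA, card_nbrOutHat hL]; linarith [hp a1]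
  have cB : (B.card : ℤ) ≤ R - zetaIn L b2 + 2 * etaIn L b2 := by
    rw [hB, card_nbrInHat hL]; linarith [hm b2]
  have mA := mul_le_mul_of_nonneg_left cA hR0
  have mB := mul_le_mul_of_nonneg_left cB hR0
  simp only [Finset.sum_sub_distrib] at key
  rw [e1, e2, e3, e4, e4, e5, e5, i1, i1, i2, i2] at key
  linarith [hm a1, hm a2, hp b1, hp b2]

end DirectedSwitchChain
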